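/- For an odd-length chain with quadratic spectrum and maximum coupling rescaled to 1, the perfect state transfer time satisfies t₀ ≥ (π/8)·√((N+1)(N-1)(N²-5)), which is asymptotically πN²/8. -/

import Mathlib

open Finset in
theorem qc_altsum (m : ℕ) :
    ∑ k ∈ Finset.Icc 1 m, (k : ℝ) ^ 4 * (-1) ^ (m - k) = m * (m + 1) * ((m : ℝ) ^ 2 + m - 1) / 2 := by
  induction m with
  | zero => simp
  | succ n ih =>
    rw [Finset.sum_Icc_succ_top (by omega)]
    have : ∑ k ∈ Finset.Icc 1 n, (k : ℝ) ^ 4 * (-1) ^ (n + 1 - k)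
        = - ∑ k ∈ Finset.Icc 1 n, (k : ℝ) ^ 4 * (-1) ^ (n - k) := by
      rw [← Finset.sum_neg_distrib]
      apply Finset.sum_congr rfl
      intro k hk
      rw [Finset.mem_Icc] at hk
      rw [show n + 1 - k = (n - k) + 1 by omega, pow_succ]
      ring
    rw [this, ih]
    push_cast
    simp
    ring

theorem qc_prod_sign (m k : ℕ) (hk : k ≤ m) :
    0 < (-1 : ℝ) ^ (m - k) * ∏ l ∈ (Finset.Icc 1 m).erase k, ((k : ℝ) ^ 4 - (l : ℝ) ^ 4) := by
  induction m, hk using Nat.le_induction with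
  | base =>
    simp only [Nat.sub_self, pow_zero, one_mul]
    apply Finset.prod_pos
    intro l hl
    simp only [Finset.mem_erase, Finset.mem_Icc] at hl
    have h1 : (l : ℝ) < k := by exact_mod_cast (by omega : l < k)
    have := pow_lt_pow_left₀ h1 (by positivity) (n := 4) (by norm_num)
    linarith
  | succ n hn ih =>
    have h2 : (Finset.Icc 1 (n + 1)).erase k = insert (n + 1) ((Finset.Icc 1 n).erase k) := by
      ext l; simp only [Finset.mem_erase, Finset.mem_Icc, Finset.mem_insert]; omega
    rw [h2, Finset.prod_insert (by simp), show n + 1 - k = (n - k) + 1 by omega, pow_succ]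
    have h1 : (k : ℝ) < (n + 1 : ℕ) := by exact_mod_cast (by omega : k < n + 1)
    have := pow_lt_pow_left₀ h1 (by positivity) (n := 4) (by norm_num)
    have h3 : 0 < ((n + 1 : ℕ) : ℝ) ^ 4 - (k : ℝ) ^ 4 := by linarith
    have := mul_pos ih h3
    linarith

/-- The finite set of eigenvalues. -/
noncomputable def qcT (m : ℕ) : Finset ℝ :=
  insert 0 ((Finset.Icc 1 m).image (fun k : ℕ => (k : ℝ) ^ 2) ∪
    (Finset.Icc 1 m).image (fun k : ℕ => -(k : ℝ) ^ 2))

theorem qc_inj : Function.Injective (fun k : ℕ => (k : ℝ) ^ 2) := by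
  intro a b h
  have h : (a : ℝ) ^ 2 = (b : ℝ) ^ 2 := h
  have := (pow_left_inj₀ (by positivity) (by positivity) (by norm_num : (2 : ℕ) ≠ 0)).1 h
  exact_mod_cast this

theorem qc_sumT (m : ℕ) (f : ℝ → ℝ) :
    ∑ x ∈ qcT m, f x = f 0 + ∑ k ∈ Finset.Icc 1 m, (f ((k : ℝ) ^ 2) + f (-(k : ℝ) ^ 2)) := by
  have hpos : ∀ k ∈ Finset.Icc 1 m, (0 : ℝ) < (k : ℝ) ^ 2 := by
    intro k hk
    have : 0 < k := by simp at hk; omega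
    positivity
  unfold qcT
  rw [Finset.sum_insert, Finset.sum_union, Finset.sum_image, Finset.sum_image,
    Finset.sum_add_distrib]
  · intro a _ b _ h
    exact qc_inj (neg_injective h)
  · intro a _ b _ h
    exact qc_inj h
  · rw [Finset.disjoint_left]
    intro x hx hy
    obtain ⟨k, hk, rfl⟩ := Finset.mem_image.1 hx
    obtain ⟨l, hl, h⟩ := Finset.mem_image.1 hy
    have := hpos k hk
    have := hpos l hl
    linarith
  · intro h
    rcases Finset.mem_union.1 h with h | h
    · obtain ⟨l, hl, h⟩ := Finset.mem_image.1 h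
      have := hpos l hl
      linarith
    · obtain ⟨l, hl, h⟩ := Finset.mem_image.1 h
      have := hpos l hl
      linarith

theorem qc_cardT (m : ℕ) : (qcT m).card = 2 * m + 1 := by
  have h := qc_sumT m (fun _ => 1)
  simp at h
  have : ((qcT m).card : ℝ) = ((2 * m + 1 : ℕ) : ℝ) := by rw [h]; push_cast; ring
  exact_mod_cast this

/-- Polynomial with roots all eigenvalues except `x`, where `x ^ 2 = k ^ 4`. -/
noncomputable def qcP (m k : ℕ) (x : ℝ) : Polynomial ℝ :=
  Polynomial.X * (Polynomial.X + Polynomial.C x) *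
    ∏ l ∈ (Finset.Icc 1 m).erase k, (Polynomial.X ^ 2 - Polynomial.C ((l : ℝ) ^ 4))

theorem qcP_monic (m k : ℕ) (x : ℝ) : (qcP m k x).Monic := by
  unfold qcP
  apply Polynomial.Monic.mul
  · exact Polynomial.monic_X.mul (Polynomial.monic_X_add_C x)
  · apply Polynomial.monic_prod_of_monic
    intro l _
    exact Polynomial.monic_X_pow_sub_C _ (by norm_num)

theorem qcP_deg (m k : ℕ) (hk : 1 ≤ k) (hkm : k ≤ m) (x : ℝ) : (qcP m k x).natDegree = 2 * m := by
  unfold qcP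
  have h1 : (Polynomial.X * (Polynomial.X + Polynomial.C x)).Monic :=
    Polynomial.monic_X.mul (Polynomial.monic_X_add_C x)
  have h2 : ∀ l ∈ (Finset.Icc 1 m).erase k,
      (Polynomial.X ^ 2 - Polynomial.C ((l : ℝ) ^ 4)).Monic :=
    fun l _ => Polynomial.monic_X_pow_sub_C _ (by norm_num)
  rw [h1.natDegree_mul (Polynomial.monic_prod_of_monic _ _ h2),
    Polynomial.natDegree_prod_of_monic _ _ h2,
    Polynomial.monic_X.natDegree_mul (Polynomial.monic_X_add_C x)]
  simp only [Polynomial.natDegree_X_pow_sub_C, Polynomial.natDegree_X, Polynomial.natDegree_X_add_C,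
    Finset.sum_const, smul_eq_mul]
  rw [Finset.card_erase_of_mem (by simp; omega)]
  simp
  omega

theorem qcP_eval (m k : ℕ) (x y : ℝ) : (qcP m k x).eval y =
    y * (y + x) * ∏ l ∈ (Finset.Icc 1 m).erase k, (y ^ 2 - (l : ℝ) ^ 4) := by
  simp [qcP, Polynomial.eval_prod]

theorem qcP_zero (m k : ℕ) (x y : ℝ) (hx : x = (k : ℝ) ^ 2 ∨ x = -(k : ℝ) ^ 2) (hy : y ∈ qcT m)
    (hxy : y ≠ x) : (qcP m k x).eval y = 0 := by
  rw [qcP_eval]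
  have key : ∀ l ∈ Finset.Icc 1 m, (y = (l : ℝ) ^ 2 ∨ y = -(l : ℝ) ^ 2) →
      y * (y + x) * ∏ l ∈ (Finset.Icc 1 m).erase k, (y ^ 2 - (l : ℝ) ^ 4) = 0 := by
    intro l hl h
    by_cases hlk : l = k
    · subst hlk
      have : y + x = 0 := by
        rcases hx with hx | hx <;> rcases h with h | h
        · exact absurd (h.trans hx.symm) hxy
        · rw [hx, h]; ring
        · rw [hx, h]; ring
        · exact absurd (h.trans hx.symm) hxy
      rw [this]; ring
    · rw [Finset.prod_eq_zero (Finset.mem_erase.2 ⟨hlk, hl⟩), mul_zero]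
      rcases h with h | h <;> rw [h] <;> ring
  unfold qcT at hy
  rw [Finset.mem_insert, Finset.mem_union, Finset.mem_image, Finset.mem_image] at hy
  rcases hy with hy | ⟨l, hl, h⟩ | ⟨l, hl, h⟩
  · rw [hy]; ring
  · exact key l hl (Or.inl h.symm)
  · exact key l hl (Or.inr h.symm)

theorem qcP_sign (m k : ℕ) (hk : 1 ≤ k) (hkm : k ≤ m) (x : ℝ)
    (hx : x = (k : ℝ) ^ 2 ∨ x = -(k : ℝ) ^ 2) :
    0 < (-1 : ℝ) ^ (m - k) * (qcP m k x).eval x := by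
  rw [qcP_eval]
  have h2 : x ^ 2 = (k : ℝ) ^ 4 := by rcases hx with h | h <;> rw [h] <;> ring
  have h3 : x * (x + x) = 2 * (k : ℝ) ^ 4 := by rw [← h2]; ring
  rw [h2, h3]
  have hk' : (0 : ℝ) < k := by exact_mod_cast hk
  have := mul_pos (by positivity : (0 : ℝ) < 2 * (k : ℝ) ^ 4) (qc_prod_sign m k hkm)
  linarith

theorem qc_pow_zero {N : ℕ} (H : Matrix (Fin N) (Fin N) ℝ)
    (h0 : ∀ i j : Fin N, (i : ℕ) + 1 < j → H i j = 0) (k : ℕ) :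
    ∀ i j : Fin N, (i : ℕ) + k < j → (H ^ k) i j = 0 := by
  induction k with
  | zero =>
    intro i j h
    rw [pow_zero, Matrix.one_apply_ne]
    rintro rfl
    omega
  | succ k ih =>
    intro i j h
    rw [pow_succ, Matrix.mul_apply]
    apply Finset.sum_eq_zero
    intro l _
    by_cases hl : (i : ℕ) + k < l
    · rw [ih i l hl, zero_mul]
    · rw [h0 l j (by omega), mul_zero]

theorem qc_pow_pos {N : ℕ} (H : Matrix (Fin N) (Fin N) ℝ)
    (h0 : ∀ i j : Fin N, (i : ℕ) + 1 < j → H i j = 0)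
    (h1 : ∀ i j : Fin N, (i : ℕ) + 1 = j → 0 < H i j) (k : ℕ) :
    ∀ i j : Fin N, (i : ℕ) + k = j → 0 < (H ^ k) i j := by
  induction k with
  | zero =>
    intro i j h
    have : i = j := Fin.ext (by omega)
    rw [pow_zero, this, Matrix.one_apply_eq]
    norm_num
  | succ k ih =>
    intro i j h
    rw [pow_succ, Matrix.mul_apply]
    have hj := j.2
    rw [Finset.sum_eq_single (⟨i + k, by omega⟩ : Fin N)]
    · exact mul_pos (ih _ _ rfl) (h1 _ _ (by simp; omega))
    · intro l _ hl
      by_cases hl' : (i : ℕ) + k < l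
      · rw [qc_pow_zero H h0 k i l hl', zero_mul]
      · have : (l : ℕ) ≠ i + k := fun h => hl (Fin.ext h)
        rw [h0 l j (by omega), mul_zero]
    · simp

theorem qc_trace (m : ℕ) (hm : 1 ≤ m) (J : ℕ → ℝ)
    (hmid : J (m + 1) = J m)
    (H : Matrix (Fin (2 * m + 1)) (Fin (2 * m + 1)) ℝ)
    (hH : ∀ i j : Fin (2 * m + 1), H i j =
      if (i : ℕ) + 1 = (j : ℕ) then J ((i : ℕ) + 1)
      else if (j : ℕ) + 1 = (i : ℕ) then J ((j : ℕ) + 1) else 0) :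
    ∑ i, ∑ j, H (Fin.rev i) j * H j i = 4 * J m ^ 2 := by
  rw [← Fintype.sum_prod_type' (f := fun i j => H (Fin.rev i) j * H j i)]
  have ha : m - 1 < 2 * m + 1 := by omega
  have hc : m < 2 * m + 1 := by omega
  have hb : m + 1 < 2 * m + 1 := by omega
  obtain ⟨n, rfl⟩ : ∃ n, m = n + 1 := ⟨m - 1, by omega⟩
  let a : Fin (2 * (n + 1) + 1) := ⟨n, by omega⟩
  let c : Fin (2 * (n + 1) + 1) := ⟨n + 1, by omega⟩
  let b : Fin (2 * (n + 1) + 1) := ⟨n + 2, by omega⟩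
  have ra : Fin.rev a = b := by apply Fin.ext; simp [a, b]; omega
  have rb : Fin.rev b = a := by apply Fin.ext; simp [a, b]; omega
  have rc : Fin.rev c = c := by apply Fin.ext; simp [c]; omega
  have Hab : H a c = J (n + 1) := by rw [hH]; simp [a, c]
  have Hba : H c a = J (n + 1) := by
    rw [hH, if_neg (by simp only [a, c]; omega), if_pos (by simp only [a, c])]
  have Hcb : H c b = J (n + 1) := by rw [hH]; simp [b, c, hmid]
  have Hbc : H b c = J (n + 1) := by rw [hH]; simp [b, c, hmid]
  rw [← Finset.sum_subset (Finset.subset_univ {(a, c), (b, c), (c, a), (c, b)})]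
  · rw [Finset.sum_insert, Finset.sum_insert, Finset.sum_insert, Finset.sum_singleton]
    · simp only [ra, rb, rc, Hab, Hba, Hcb, Hbc]; ring
    all_goals simp [a, b, c]
  · rintro ⟨i, j⟩ _ hx
    simp only [Finset.mem_insert, Finset.mem_singleton, Prod.mk.injEq, not_or, Fin.ext_iff, a, b, c]
      at hx
    by_contra hne
    have h1 : H (Fin.rev i) j ≠ 0 := left_ne_zero_of_mul hne
    have h2 : H j i ≠ 0 := right_ne_zero_of_mul hne
    rw [hH] at h1 h2
    have h1' : (Fin.rev i : ℕ) + 1 = j ∨ (j : ℕ) + 1 = Fin.rev i := by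
      by_contra h; push Not at h; rw [if_neg h.1, if_neg h.2] at h1; exact h1 rfl
    have h2' : (j : ℕ) + 1 = i ∨ (i : ℕ) + 1 = j := by
      by_contra h; push Not at h; rw [if_neg h.1, if_neg h.2] at h2; exact h2 rfl
    rw [Fin.val_rev] at h1'
    omega

theorem qc_spectral {N : ℕ} (H : Matrix (Fin N) (Fin N) ℝ) (hs : H.IsHermitian) :
    ∃ (U : Matrix (Fin N) (Fin N) ℝ) (d : Fin N → ℝ), U * U.transpose = 1 ∧ U.transpose * U = 1 ∧
      H = U * Matrix.diagonal d * U.transpose ∧ Set.range d = spectrum ℝ H := by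
  have h1 := Matrix.mem_unitaryGroup_iff.1 hs.eigenvectorUnitary.2
  have h2 := Matrix.mem_unitaryGroup_iff'.1 hs.eigenvectorUnitary.2
  have h3 := hs.spectral_theorem
  rw [Unitary.conjStarAlgAut_apply] at h3
  have e : star (hs.eigenvectorUnitary : Matrix (Fin N) (Fin N) ℝ) =
      (hs.eigenvectorUnitary : Matrix (Fin N) (Fin N) ℝ).transpose := by
    ext i j; simp [Matrix.star_apply]
  refine ⟨hs.eigenvectorUnitary, hs.eigenvalues, ?_, ?_, ?_, ?_⟩
  · rw [← e]; exact h1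
  · rw [← e]; exact h2
  · rw [← e]; exact h3
  · exact hs.spectrum_real_eq_range_eigenvalues.symm

theorem qc_main (m : ℕ) (hm : 1 ≤ m) (J : ℕ → ℝ)
    (hJpos : ∀ n, 1 ≤ n → n ≤ 2 * m → 0 < J n)
    (hmirror : ∀ n, 1 ≤ n → n ≤ 2 * m → J n = J (2 * m + 1 - n))
    (H : Matrix (Fin (2 * m + 1)) (Fin (2 * m + 1)) ℝ)
    (hH : ∀ i j : Fin (2 * m + 1), H i j =
      if (i : ℕ) + 1 = (j : ℕ) then J ((i : ℕ) + 1)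
      else if (j : ℕ) + 1 = (i : ℕ) then J ((j : ℕ) + 1) else 0)
    (hspec : spectrum ℝ H = ↑(qcT m)) :
    4 * J m ^ 2 = m * (m + 1) * ((m : ℝ) ^ 2 + m - 1) := by
  have hsym : ∀ i j, H i j = H j i := by
    intro i j
    rw [hH, hH]
    split_ifs <;> first | rfl | omega
  have hherm : H.IsHermitian := by
    ext i j
    simp [hsym i j]
  have hrev : ∀ i j, H (Fin.rev i) (Fin.rev j) = H i j := by
    intro i j
    rw [hH, hH]
    simp only [Fin.val_rev]
    have hi := i.2
    have hj := j.2
    by_cases c1 : (i : ℕ) + 1 = j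
    · rw [if_pos c1, if_neg (by omega), if_pos (by omega),
        hmirror ((i : ℕ) + 1) (by omega) (by omega)]
      congr 1; omega
    · by_cases c2 : (j : ℕ) + 1 = i
      · rw [if_neg c1, if_pos c2, if_pos (by omega),
          hmirror ((j : ℕ) + 1) (by omega) (by omega)]
        congr 1; omega
      · rw [if_neg c1, if_neg c2, if_neg (by omega), if_neg (by omega)]
  have h0 : ∀ i j : Fin (2 * m + 1), (i : ℕ) + 1 < j → H i j = 0 := by
    intro i j h
    rw [hH, if_neg (by omega), if_neg (by omega)]
  have h1 : ∀ i j : Fin (2 * m + 1), (i : ℕ) + 1 = j → 0 < H i j := by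
    intro i j h
    rw [hH, if_pos h]
    exact hJpos _ (by omega) (by omega)
  obtain ⟨U, d, hU1, hU2, hUH, hd⟩ := qc_spectral H hherm
  rw [hspec] at hd
  have hdT : ∀ i, d i ∈ qcT m := by
    intro i
    have : d i ∈ (↑(qcT m) : Set ℝ) := by rw [← hd]; exact ⟨i, rfl⟩
    exact this
  have himg : Finset.univ.image d = qcT m := by
    apply Finset.coe_injective
    rw [Finset.coe_image, Finset.coe_univ, Set.image_univ, hd]
  have hinj : Function.Injective d := by
    have : (Finset.univ.image d).card = (Finset.univ : Finset (Fin (2 * m + 1))).card := by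
      rw [himg, qc_cardT]; simp
    have := Finset.card_image_iff.1 this
    simpa using this
  set D := Matrix.diagonal d with hD
  set S : Matrix (Fin (2 * m + 1)) (Fin (2 * m + 1)) ℝ :=
    Matrix.of (fun i j => if j = Fin.rev i then 1 else 0) with hS
  have hSl : ∀ (A : Matrix (Fin (2 * m + 1)) (Fin (2 * m + 1)) ℝ) i j,
      (S * A) i j = A (Fin.rev i) j := by
    intro A i j
    simp [hS, Matrix.mul_apply]
  have hSr : ∀ (A : Matrix (Fin (2 * m + 1)) (Fin (2 * m + 1)) ℝ) i j,
      (A * S) i j = A i (Fin.rev j) := by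
    intro A i j
    have : ∀ x : Fin (2 * m + 1), (j = Fin.rev x) = (x = Fin.rev j) := by
      intro x
      apply propext
      constructor
      · rintro rfl; simp
      · rintro rfl; simp
    simp [hS, Matrix.mul_apply, this]
  have hSS : S * S = 1 := by
    ext i j
    rw [hSl]
    simp [hS, Matrix.one_apply, eq_comm]
  have hSH : S * H = H * S := by
    ext i j
    rw [hSl, hSr, ← hrev, Fin.rev_rev]
  set M := U.transpose * S * U with hM
  have hUM : S * U = U * M := by
    rw [hM, ← Matrix.mul_assoc, ← Matrix.mul_assoc, hU1, Matrix.one_mul]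
  have hHU : H * U = U * D := by
    rw [hUH, Matrix.mul_assoc, hU2, Matrix.mul_one]
  have hUHt : U.transpose * H = D * U.transpose := by
    rw [hUH, ← Matrix.mul_assoc, ← Matrix.mul_assoc, hU2, Matrix.one_mul]
  have hMD : M * D = D * M := by
    calc M * D = U.transpose * S * (U * D) := by rw [hM, Matrix.mul_assoc]
      _ = U.transpose * (S * H) * U := by rw [← hHU]; simp only [Matrix.mul_assoc]
      _ = (U.transpose * H) * (S * U) := by rw [hSH]; simp only [Matrix.mul_assoc]
      _ = D * M := by rw [hUHt, hM]; simp only [Matrix.mul_assoc]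
  have hMoff : ∀ i j, i ≠ j → M i j = 0 := by
    intro i j hij
    have := congrFun (congrFun hMD i) j
    rw [hD, Matrix.mul_diagonal, Matrix.diagonal_mul] at this
    have hne : d j - d i ≠ 0 := sub_ne_zero.2 (fun h => hij (hinj h).symm)
    have h2 : (d j - d i) * M i j = 0 := by linarith
    exact (mul_eq_zero.1 h2).resolve_left hne
  have hMM : M * M = 1 := by
    calc M * M = U.transpose * S * (U * M) := by rw [hM]; simp only [Matrix.mul_assoc]
      _ = U.transpose * (S * S) * U := by rw [← hUM]; simp only [Matrix.mul_assoc]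
      _ = 1 := by rw [hSS, Matrix.mul_one, hU2]
  have hMsq : ∀ i, M i i * M i i = 1 := by
    intro i
    have := congrFun (congrFun hMM i) i
    rw [Matrix.mul_apply, Finset.sum_eq_single i, Matrix.one_apply_eq] at this
    · exact this
    · intro j _ hj
      rw [hMoff i j hj.symm, zero_mul]
    · simp
  have hUrev : ∀ a i, U (Fin.rev a) i = U a i * M i i := by
    intro a i
    have := congrFun (congrFun hUM a) i
    rw [hSl, Matrix.mul_apply, Finset.sum_eq_single i] at this
    · exact this
    · intro j _ hj
      rw [hMoff j i hj, mul_zero]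
    · simp
  have hpow : ∀ k : ℕ, H ^ k = U * Matrix.diagonal (fun i => d i ^ k) * U.transpose := by
    intro k
    induction k with
    | zero => simp [hU1]
    | succ k ih =>
      rw [pow_succ, ih, Matrix.mul_assoc, hUHt, hD, ← Matrix.mul_assoc, Matrix.mul_assoc U,
        Matrix.diagonal_mul_diagonal]
      simp only [pow_succ]
  have hpowe : ∀ (k : ℕ) a b, (H ^ k) a b = ∑ j, U a j * d j ^ k * U b j := by
    intro k a b
    rw [hpow k, Matrix.mul_apply]
    simp [Matrix.mul_diagonal]
  -- sign of M
  have hsign : ∀ i, ∀ k, 1 ≤ k → k ≤ m → (d i = (k : ℝ) ^ 2 ∨ d i = -(k : ℝ) ^ 2) →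
      M i i = (-1) ^ (m - k) := by
    intro i k hk hkm hx
    set q := qcP m k (d i) with hq
    have hqd : q.natDegree = 2 * m := qcP_deg m k hk hkm _
    have hqm : q.Monic := qcP_monic _ _ _
    have e1 : ∑ t ∈ Finset.range (2 * m + 1), q.coeff t * (H ^ t) 0 (Fin.rev 0)
        = (H ^ (2 * m)) 0 (Fin.rev 0) := by
      rw [Finset.sum_range_succ, Finset.sum_eq_zero, zero_add]
      · have : q.coeff (2 * m) = 1 := by rw [← hqd]; exact hqm
        rw [this, one_mul]
      · intro t ht
        rw [Finset.mem_range] at ht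
        rw [qc_pow_zero H h0 t 0 (Fin.rev 0) (by simp [Fin.val_rev]; omega), mul_zero]
    have e2 : ∑ t ∈ Finset.range (2 * m + 1), q.coeff t * (H ^ t) 0 (Fin.rev 0)
        = ∑ j, U 0 j * q.eval (d j) * U (Fin.rev 0) j := by
      simp only [hpowe, Finset.mul_sum]
      rw [Finset.sum_comm]
      apply Finset.sum_congr rfl
      intro j _
      rw [Polynomial.eval_eq_sum_range, hqd, Finset.mul_sum, Finset.sum_mul]
      apply Finset.sum_congr rfl
      intro t _
      ring
    have e3 : ∑ j, U 0 j * q.eval (d j) * U (Fin.rev 0) j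
        = U 0 i * q.eval (d i) * U (Fin.rev 0) i := by
      apply Finset.sum_eq_single i
      · intro j _ hj
        rw [hq, qcP_zero m k (d i) (d j) hx (hdT j) (fun h => hj (hinj h))]
        ring
      · simp
    have e4 : 0 < (H ^ (2 * m)) 0 (Fin.rev 0) :=
      qc_pow_pos H h0 h1 (2 * m) 0 (Fin.rev 0) (by simp [Fin.val_rev])
    rw [← e1, e2, e3, hUrev] at e4
    have e5 := qcP_sign m k hk hkm (d i) hx
    rw [← hq] at e5
    have e6 : 0 < q.eval (d i) * M i i := by
      have : 0 < (U 0 i) ^ 2 * (q.eval (d i) * M i i) := by linarith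
      exact pos_of_mul_pos_right this (sq_nonneg _)
    have e7 : M i i = 1 ∨ M i i = -1 := mul_self_eq_one_iff.1 (hMsq i)
    have e8 := neg_one_pow_eq_or ℝ (m - k)
    rcases e7 with e7 | e7 <;> rcases e8 with e8 | e8 <;> rw [e7] at e6 ⊢ <;> rw [e8] at e5 ⊢ <;>
      linarith
  -- trace
  have htr : ∑ i, ∑ j, H (Fin.rev i) j * H j i = ∑ i, d i ^ 2 * M i i := by
    have t1 : ∀ i, ∑ j, H (Fin.rev i) j * H j i = ∑ j, (U i j * U i j) * (d j ^ 2 * M j j) := by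
      intro i
      rw [← Matrix.mul_apply, ← pow_two, hpowe]
      apply Finset.sum_congr rfl
      intro j _
      rw [hUrev]; ring
    simp only [t1]
    rw [Finset.sum_comm]
    apply Finset.sum_congr rfl
    intro j _
    rw [← Finset.sum_mul]
    have := congrFun (congrFun hU2 j) j
    rw [Matrix.mul_apply, Matrix.one_apply_eq] at this
    simp only [Matrix.transpose_apply] at this
    rw [this, one_mul]
  have hmid : J (m + 1) = J m := by
    rw [hmirror m hm (by omega)]
    congr 1; omega
  rw [qc_trace m hm J hmid H hH] at htr
  rw [htr]
  let f : ℝ → ℝ := fun x => x ^ 2 * (-1) ^ (m - ⌊Real.sqrt |x|⌋₊)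
  have hfl : ∀ k : ℕ, ⌊Real.sqrt |(k : ℝ) ^ 2|⌋₊ = k := by
    intro k
    rw [abs_of_nonneg (by positivity), Real.sqrt_sq (by positivity), Nat.floor_natCast]
  have hf1 : ∀ k : ℕ, f ((k : ℝ) ^ 2) = (k : ℝ) ^ 4 * (-1) ^ (m - k) := by
    intro k
    simp only [f, hfl]; ring
  have hf2 : ∀ k : ℕ, f (-(k : ℝ) ^ 2) = (k : ℝ) ^ 4 * (-1) ^ (m - k) := by
    intro k
    simp only [f, abs_neg, hfl]; ring
  have hf0 : f 0 = 0 := by simp [f]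
  have t2 : ∑ i, d i ^ 2 * M i i = ∑ i, f (d i) := by
    apply Finset.sum_congr rfl
    intro i _
    have hy := hdT i
    unfold qcT at hy
    rw [Finset.mem_insert, Finset.mem_union, Finset.mem_image, Finset.mem_image] at hy
    rcases hy with hy | ⟨l, hl, h⟩ | ⟨l, hl, h⟩
    · rw [hy, hf0]; ring
    · rw [Finset.mem_Icc] at hl
      rw [hsign i l hl.1 hl.2 (Or.inl h.symm), ← h, hf1]; ring
    · rw [Finset.mem_Icc] at hl
      rw [hsign i l hl.1 hl.2 (Or.inr h.symm), ← h, hf2]; ring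
  rw [t2, ← Finset.sum_image (f := f) (g := d) (fun a _ b _ h => hinj h), himg, qc_sumT, hf0]
  simp only [hf1, hf2]
  rw [Finset.sum_add_distrib, qc_altsum]
  ring

/-- For an odd-length mirror-symmetric field-free XX chain with quadratic spectrum
`0, ±1, ±2², …, ±((N-1)/2)²` and maximum coupling rescaled to `1`, the perfect state
transfer time `t₀ = π·J_max` satisfies `t₀ ≥ (π/8)·√((N+1)(N-1)(N²-5))`. -/
theorem quadratic_chain_transfer_time_odd (N : ℕ) (hN : Odd N) (hN3 : 3 ≤ N)
    (J : ℕ → ℝ) (hJpos : ∀ n, 1 ≤ n → n ≤ N - 1 → 0 < J n)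
    (hmirror : ∀ n, 1 ≤ n → n ≤ N - 1 → J n = J (N - n))
    (H : Matrix (Fin N) (Fin N) ℝ)
    (hH : ∀ i j : Fin N, H i j =
      if (i : ℕ) + 1 = (j : ℕ) then J ((i : ℕ) + 1)
      else if (j : ℕ) + 1 = (i : ℕ) then J ((j : ℕ) + 1) else 0)
    (hspec : spectrum ℝ H =
      {x : ℝ | x = 0 ∨ ∃ k : ℕ, 1 ≤ k ∧ k ≤ (N - 1) / 2 ∧
        (x = (k : ℝ) ^ 2 ∨ x = -((k : ℝ) ^ 2))})
    (Jmax : ℝ)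
    (hub : ∀ n, 1 ≤ n → n ≤ N - 1 → J n ≤ Jmax)
    (hmem : ∃ n, 1 ≤ n ∧ n ≤ N - 1 ∧ J n = Jmax) :
    Real.pi * Jmax ≥ Real.pi / 8 * Real.sqrt ((N + 1) * (N - 1) * ((N : ℝ) ^ 2 - 5)) := by
  obtain ⟨m, rfl⟩ := hN
  have hm : 1 ≤ m := by omega
  simp only [Nat.add_sub_cancel] at hJpos hmirror hub hspec
  rw [show 2 * m / 2 = m by omega] at hspec
  have hspec' : spectrum ℝ H = ↑(qcT m) := by
    rw [hspec]
    ext x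
    simp only [qcT, Set.mem_setOf_eq, Finset.mem_coe, Finset.mem_insert, Finset.mem_union,
      Finset.mem_image, Finset.mem_Icc]
    apply or_congr Iff.rfl
    constructor
    · rintro ⟨k, h1, h2, h | h⟩
      · exact Or.inl ⟨k, ⟨h1, h2⟩, h.symm⟩
      · exact Or.inr ⟨k, ⟨h1, h2⟩, h.symm⟩
    · rintro (⟨k, ⟨h1, h2⟩, h⟩ | ⟨k, ⟨h1, h2⟩, h⟩)
      · exact ⟨k, h1, h2, Or.inl h.symm⟩
      · exact ⟨k, h1, h2, Or.inr h.symm⟩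
  have key := qc_main m hm J hJpos hmirror H hH hspec'
  have hJm := hub m hm (by omega)
  have hJ0 := hJpos m hm (by omega)
  have hs : Real.sqrt (((2 * m + 1 : ℕ) + 1) * ((2 * m + 1 : ℕ) - 1) *
      (((2 * m + 1 : ℕ) : ℝ) ^ 2 - 5)) = 8 * J m := by
    rw [Real.sqrt_eq_iff_mul_self_eq_of_pos (by positivity)]
    push_cast
    linear_combination 16 * key
  rw [hs]
  have := mul_le_mul_of_nonneg_left hJm Real.pi_pos.le
  linarith
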